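/- arXiv:1901.04241 — 3 statements merged into one kernel-verified Lean document; each statement's English description precedes it below -/
import Mathlib

section
/- Let n be odd, let ω be a primitive n-th root of unity in a field F, and let e_0, …, e_{n−1} ∈ F^n be the rows of the Fourier matrix. Let r = 2t be even with 0 < r < n, and let C be the F-linear span of the r rows e_1, e_3, …, e_{r−1}, e_{n−r+1}, e_{n−r+3}, …, e_{n−1} (i.e. e_j and e_{n−j} for each odd j with 1 ≤ j ≤ r−1). Then C is an LCD MDS code of length n, dimension r, and minimum distance n − r + 1. -/
/-- Hamming weight of a vector: the number of nonzero coordinates. -/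
noncomputable def hWeight {F : Type*} [Field F] {n : ℕ} (v : Fin n → F) : ℕ :=
  open scoped Classical in
  (Finset.univ.filter fun m => v m ≠ 0).card

/-- The dual code of `C` with respect to the standard bilinear form. -/
def dualCode {F : Type*} [Field F] {n : ℕ} (C : Submodule F (Fin n → F)) :
    Submodule F (Fin n → F) where
  carrier := {v | ∀ u ∈ C, ∑ m, u m * v m = 0}
  add_mem' := by
    intro a b ha hb u hu
    have h : ∑ m, u m * (a + b) m = (∑ m, u m * a m) + ∑ m, u m * b m := by
      rw [← Finset.sum_add_distrib]
      exact Finset.sum_congr rfl fun m _ => by simp [mul_add]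
    rw [h, ha u hu, hb u hu, add_zero]
  zero_mem' := by intro u hu; simp
  smul_mem' := by
    intro c a ha u hu
    have h : ∑ m, u m * (c • a) m = c * ∑ m, u m * a m := by
      rw [Finset.mul_sum]
      exact Finset.sum_congr rfl fun m _ => by simp [smul_eq_mul]; ring
    rw [h, ha u hu, mul_zero]

/-- Minimum distance of a code: the least Hamming weight of a nonzero codeword. -/
noncomputable def minDist {F : Type*} [Field F] {n : ℕ} (C : Submodule F (Fin n → F)) : ℕ :=
  sInf {d | ∃ v ∈ C, v ≠ 0 ∧ hWeight v = d}

/-- The `i`-th row of the Fourier matrix built from `ω`: `(e_i)_m = ω^(i·m)`. -/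
def fourierRow {F : Type*} [Field F] (n : ℕ) (ω : F) (i : ZMod n) : Fin n → F :=
  fun m => ω ^ (i.val * m.val)

open Polynomial in
/-- GRS evaluation map. -/
noncomputable def grsMap {F : Type*} [Field F] (n : ℕ) (u x : Fin n → F) : F[X] →ₗ[F] (Fin n → F) where
  toFun p := fun m => u m * p.eval (x m)
  map_add' p q := by ext m; simp [mul_add]
  map_smul' c p := by ext m; simp; ring

open Polynomial in
theorem grs_inj {F : Type*} [Field F] {n r : ℕ} {u x : Fin n → F} (hu : ∀ m, u m ≠ 0)
    (hx : Function.Injective x) {p : F[X]} (hp : p ∈ degreeLT F r) (s : Finset (Fin n))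
    (hs : r ≤ s.card) (h0 : ∀ m ∈ s, grsMap n u x p m = 0) : p = 0 := by
  refine eq_zero_of_degree_lt_of_eval_index_eq_zero s (v := x) hx.injOn ?_ ?_
  · exact lt_of_lt_of_le (mem_degreeLT.1 hp) (by exact_mod_cast hs)
  · intro m hm
    exact (mul_eq_zero.1 (h0 m hm)).resolve_left (hu m)

open Polynomial in
theorem grs_finrank {F : Type*} [Field F] {n r : ℕ} {u x : Fin n → F} (hu : ∀ m, u m ≠ 0)
    (hx : Function.Injective x) (hr : r ≤ n) :
    Module.finrank F ((degreeLT F r).map (grsMap n u x)) = r := by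
  have e := (degreeLTEquiv F r).finrank_eq
  rw [Module.finrank_fin_fun] at e
  rw [← LinearMap.range_domRestrict]
  refine Eq.trans ?_ e
  apply LinearMap.finrank_range_of_inj
  rw [injective_iff_map_eq_zero]
  intro p h
  apply Subtype.ext
  refine grs_inj hu hx p.2 Finset.univ (by simpa using hr) fun m _ => ?_
  exact congrFun h m

theorem hWeight_add {F : Type*} [Field F] {n : ℕ} (v : Fin n → F) (s : Finset (Fin n))
    (hs : ∀ m, m ∈ s ↔ v m = 0) : hWeight v + s.card = n := by
  classical
  have h := Finset.card_filter_add_card_filter_not (s := (Finset.univ : Finset (Fin n)))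
    (fun m => v m ≠ 0)
  have : s = Finset.univ.filter (fun m => ¬ (v m ≠ 0)) := by ext m; simp [hs]
  rw [this]
  unfold hWeight
  simp only [Finset.card_univ, Fintype.card_fin] at h
  convert h

open Polynomial in
theorem grs_minDist {F : Type*} [Field F] {n r : ℕ} {u x : Fin n → F} (hu : ∀ m, u m ≠ 0)
    (hx : Function.Injective x) (hr0 : 0 < r) (hr : r < n) :
    minDist ((degreeLT F r).map (grsMap n u x)) = n - r + 1 := by
  classical
  refine IsLeast.csInf_eq ⟨?_, ?_⟩
  · obtain ⟨s, hs⟩ := Finset.exists_subset_card_eq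
      (s := (Finset.univ : Finset (Fin n))) (n := r - 1) (by simp; omega)
    have hz : ∀ m, m ∈ s ↔ grsMap n u x (Lagrange.nodal s x) m = 0 := by
      intro m
      change _ ↔ u m * _ = 0
      simp only [mul_eq_zero, hu, false_or, Lagrange.eval_nodal, Finset.prod_eq_zero_iff, sub_eq_zero]
      constructor
      · intro h; exact ⟨m, h, rfl⟩
      · rintro ⟨a, ha, h⟩; rwa [hx h]
    have hw := hWeight_add _ s hz
    refine ⟨_, Submodule.mem_map_of_mem (f := grsMap n u x) (?_ : Lagrange.nodal s x ∈ _), ?_, ?_⟩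
    · rw [mem_degreeLT, Lagrange.degree_nodal, hs.2]
      exact_mod_cast (by omega : r - 1 < r)
    · intro h
      have : s = Finset.univ := by ext m; simp [hz, h]
      have := hs.2
      simp_all
      omega
    · omega
  · rintro d ⟨v, ⟨p, hp, rfl⟩, hv, rfl⟩
    have hw := hWeight_add (grsMap n u x p)
      (Finset.univ.filter fun m => grsMap n u x p m = 0) (by simp)
    by_contra hlt
    apply hv
    rw [grs_inj hu hx hp (Finset.univ.filter fun m => grsMap n u x p m = 0) (by omega) (by simp),
      map_zero]

theorem fourierRow_int {F : Type*} [Field F] (n : ℕ) [NeZero n] (ω : F) (hω : ω ^ n = 1)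
    (z : ℤ) (m : Fin n) : fourierRow n ω (z : ZMod n) m = ω ^ (z * (m : ℕ)) := by
  have h0 : ω ≠ 0 := by
    rintro rfl
    simp [NeZero.ne n] at hω
  unfold fourierRow
  have h := ZMod.val_intCast (n := n) z
  rw [← zpow_natCast, Nat.cast_mul, h]
  have : z * (m : ℕ) = (z % n) * (m : ℕ) + n * (z / n * (m : ℕ)) := by
    conv_lhs => rw [← Int.emod_add_mul_ediv z n]
    ring
  rw [this, zpow_add₀ h0, zpow_mul ω (n : ℤ), zpow_natCast, hω]
  simp

theorem sum_zpow {F : Type*} [Field F] (n : ℕ) [NeZero n] (ω : F) (hω : IsPrimitiveRoot ω n)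
    (z : ℤ) (hz : ¬ (n : ℤ) ∣ z) : ∑ m : Fin n, ω ^ (z * (m : ℕ)) = 0 := by
  have h1 : ω ^ z ≠ 1 := fun h => hz ((hω.zpow_eq_one_iff_dvd z).1 h)
  have : ∀ m : Fin n, ω ^ (z * (m : ℕ)) = (ω ^ z) ^ (m : ℕ) := fun m => by
    rw [zpow_mul, zpow_natCast]
  simp_rw [this]
  rw [Fin.sum_univ_eq_sum_range (fun i => (ω ^ z) ^ i), geom_sum_eq h1]
  rw [← zpow_natCast, ← zpow_mul, mul_comm, zpow_mul, zpow_natCast, hω.pow_eq_one]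
  simp

/-- For odd `n` and even `r = 2t` with `0 < r < n`, the span of the rows
`e_j` and `e_{n−j}` for each odd `j` with `1 ≤ j ≤ r−1` (i.e. `e_1, e_3, …, e_{r−1},
e_{n−r+1}, e_{n−r+3}, …, e_{n−1}`) is an LCD MDS code of length `n`, dimension `r` and
minimum distance `n − r + 1`. -/
theorem span_odd_rows_LCD_MDS {F : Type*} [Field F] (n : ℕ) [NeZero n] (hn : Odd n) (ω : F)
    (hω1 : ω ^ n = 1) (hωprim : ∀ i : ℕ, 1 ≤ i → i < n → ω ^ i ≠ 1)
    (r : ℕ) (hreven : Even r) (hr0 : 0 < r) (hrn : r < n)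
    (C : Submodule F (Fin n → F))
    (hC : C = Submodule.span F (fourierRow n ω ''
      {i : ZMod n | ∃ j : ℕ, Odd j ∧ j ≤ r - 1 ∧ (i = (j : ZMod n) ∨ i = -(j : ZMod n))})) :
    Module.finrank F C = r ∧ minDist C = n - r + 1 ∧ C ⊓ dualCode C = ⊥ := by
  classical
  have hprim : IsPrimitiveRoot ω n := by
    refine IsPrimitiveRoot.mk_of_lt ω (NeZero.pos n) hω1 ?_
    intro l h1 h2; exact hωprim l h1 h2
  have h0 : ω ≠ 0 := hprim.ne_zero (NeZero.ne n)
  obtain ⟨a, ha⟩ := hn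
  obtain ⟨t, ht⟩ := hreven
  set x : Fin n → F := fun m => ω ^ (2 * (m : ℕ)) with hxdef
  set u : Fin n → F := fun m => ω ^ (-((r : ℤ) - 1) * (m : ℕ)) with hudef
  have hu : ∀ m, u m ≠ 0 := fun m => zpow_ne_zero _ h0
  have hx : Function.Injective x := by
    intro i j hij
    simp only [hxdef, pow_mul] at hij
    have h2 : IsPrimitiveRoot (ω ^ 2) n := hprim.pow_of_coprime 2 (by
      rw [ha]; simp)
    exact Fin.ext (h2.pow_inj i.2 j.2 hij)
  have hmono : ∀ k : ℕ, ∀ m, grsMap n u x (Polynomial.X ^ k) m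
      = ω ^ ((2 * (k : ℤ) - (r - 1)) * (m : ℕ)) := by
    intro k m
    change u m * _ = _
    simp only [Polynomial.eval_pow, Polynomial.eval_X, hxdef, hudef]
    rw [← pow_mul, ← zpow_natCast, ← zpow_add₀ h0]
    congr 1
    push_cast
    ring
  have hrow : ∀ k : ℕ, grsMap n u x (Polynomial.X ^ k)
      = fourierRow n ω (((2 * (k : ℤ) - (r - 1) : ℤ)) : ZMod n) := by
    intro k; ext m; rw [hmono, fourierRow_int n ω hω1]
  have hCm : C = (Polynomial.degreeLT F r).map (grsMap n u x) := by
    rw [hC, Polynomial.degreeLT_eq_span_X_pow, Submodule.map_span]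
    congr 1
    ext v
    simp only [Set.mem_image, Set.mem_ofPred_eq, Finset.coe_image, Finset.coe_range, Set.mem_Iio]
    constructor
    · rintro ⟨i, ⟨j, ⟨b, hb⟩, hj, hi | hi⟩, rfl⟩
      · refine ⟨_, ⟨t + b, by omega, rfl⟩, ?_⟩
        rw [hrow, hi, ← Int.cast_natCast j]
        congr 2
        push_cast; omega
      · refine ⟨_, ⟨t - 1 - b, by omega, rfl⟩, ?_⟩
        rw [hrow, hi, ← Int.cast_natCast j, ← Int.cast_neg]
        congr 2
        omega
    · rintro ⟨_, ⟨k, hk, rfl⟩, rfl⟩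
      refine ⟨_, ⟨(2 * (k : ℤ) - (r - 1)).natAbs, ?_, ?_, ?_⟩, (hrow k).symm⟩
      · rw [Int.natAbs_odd]; exact ⟨k - t, by omega⟩
      · omega
      · rw [← Int.cast_natCast (2 * (k : ℤ) - (r - 1)).natAbs, ← Int.cast_neg]
        rcases le_total 0 (2 * (k : ℤ) - (r - 1)) with h | h
        · left; congr 1; omega
        · right; congr 1; omega
  refine ⟨?_, ?_, ?_⟩
  · rw [hCm]; exact grs_finrank hu hx hrn.le
  · rw [hCm]; exact grs_minDist hu hx hr0 hrn
  · rw [eq_bot_iff]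
    rintro v ⟨hv, hd⟩
    rw [hCm] at hv
    obtain ⟨p, hp, rfl⟩ := hv
    have hn0 : (n : F) ≠ 0 := by
      have := hprim.neZero'
      exact NeZero.ne _
    suffices p = 0 by simp [this]
    have hdeg := Polynomial.mem_degreeLT.1 hp
    ext l
    by_cases hl : r ≤ l
    · simpa using Polynomial.coeff_eq_zero_of_degree_lt (hdeg.trans_le (by exact_mod_cast hl))
    have hmem : grsMap n u x (Polynomial.X ^ (r - 1 - l)) ∈ C := by
      rw [hCm]
      refine Submodule.mem_map_of_mem ?_
      rw [Polynomial.mem_degreeLT, Polynomial.degree_X_pow]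
      exact_mod_cast (by omega : r - 1 - l < r)
    have hs := hd _ hmem
    have hpe : grsMap n u x p = ∑ k ∈ Finset.range r, p.coeff k • grsMap n u x (Polynomial.X ^ k) := by
      conv_lhs => rw [p.as_sum_range' r
        (by
          by_cases hp0 : p = 0
          · simpa [hp0] using hr0
          · exact (Polynomial.natDegree_lt_iff_degree_lt hp0).2 hdeg)]
      rw [map_sum]
      refine Finset.sum_congr rfl fun k _ => ?_
      rw [← map_smul, Polynomial.smul_X_eq_monomial]
    rw [hpe] at hs
    simp only [Finset.sum_apply, Finset.mul_sum, Pi.smul_apply, smul_eq_mul] at hs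
    rw [Finset.sum_comm, Finset.sum_eq_single l] at hs
    · have : ∀ m : Fin n, grsMap n u x (Polynomial.X ^ (r - 1 - l)) m *
          (p.coeff l * grsMap n u x (Polynomial.X ^ l) m) = p.coeff l := by
        intro m
        rw [hmono, hmono, mul_left_comm, ← zpow_add₀ h0, ← add_mul]
        have : (2 * ((r - 1 - l : ℕ) : ℤ) - (r - 1) + (2 * (l : ℤ) - (r - 1))) = 0 := by omega
        rw [this]; simp
      simp_rw [this] at hs
      simpa [hn0] using hs
    · intro k hk hkl
      have : ∀ m : Fin n, grsMap n u x (Polynomial.X ^ (r - 1 - l)) m *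
          (p.coeff k * grsMap n u x (Polynomial.X ^ k) m)
          = p.coeff k * ω ^ ((2 * ((k : ℤ) - l)) * (m : ℕ)) := by
        intro m
        rw [hmono, hmono, mul_left_comm, ← zpow_add₀ h0, ← add_mul]
        congr 3
        omega
      simp_rw [this]
      rw [← Finset.mul_sum, sum_zpow n ω hprim, mul_zero]
      intro hdvd
      have hc : IsCoprime (n : ℤ) 2 := ⟨1, -a, by rw [ha]; push_cast; ring⟩
      have h3 := hc.dvd_of_dvd_mul_left hdvd
      have hk' := Finset.mem_range.1 hk
      have := Int.eq_zero_of_abs_lt_dvd h3 (by rw [abs_lt]; omega)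
      omega
    · intro h; simp at h; omega
end

section
/- Let n, r be integers with 0 < r < n such that at least one of n, r is odd, and let p be a prime not dividing n. Then there exist β ≥ 1 and a linear code C ⊆ GF(p^β)^n with dim C = r, minimum distance (least Hamming weight of a nonzero codeword) equal to n − r + 1, and C ∩ C^⊥ = {0} (dual with respect to the standard bilinear form); that is, an LCD MDS (n, r, n−r+1) code exists over a finite field of characteristic p. -/
open Polynomial in
theorem aux_prim (n p : ℕ) [Fact p.Prime] (hn : 0 < n) (hpn : ¬ p ∣ n) :
    ∃ β : ℕ, 1 ≤ β ∧ ∃ w : GaloisField p β, IsPrimitiveRoot w n := by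
  have hp : p.Prime := Fact.out
  have hc : Nat.Coprime p n := (Nat.Prime.coprime_iff_not_dvd hp).2 hpn
  have hβ : 0 < n.totient := Nat.totient_pos.2 hn
  refine ⟨n.totient, hβ, ?_⟩
  have h1 : n ∣ p ^ n.totient - 1 :=
    (Nat.modEq_iff_dvd' (Nat.one_le_pow _ _ hp.pos)).1 (Nat.ModEq.pow_totient hc).symm
  obtain ⟨g, hg⟩ := IsCyclic.exists_ofOrder_eq_natCard (α := (GaloisField p n.totient)ˣ)
  have hcard : Nat.card (GaloisField p n.totient)ˣ = p ^ n.totient - 1 := by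
    rw [Nat.card_units, GaloisField.card p _ hβ.ne']
  rw [hcard] at hg
  obtain ⟨k, hk⟩ := h1
  have hpos : 0 < orderOf g := orderOf_pos g
  have hP : IsPrimitiveRoot g (p ^ n.totient - 1) := hg ▸ IsPrimitiveRoot.orderOf g
  have := hP.pow (by omega) (show _ = k * n by rw [hk, mul_comm])
  exact ⟨_, this.map_of_injective (f := Units.coeHom _) Units.val_injective⟩

theorem aux_sum {F : Type*} [Field F] {n : ℕ} {w : F} (hw : IsPrimitiveRoot w n) (e : ℕ) :
    ∑ m : Fin n, (w ^ e) ^ (m : ℕ) = if n ∣ e then (n : F) else 0 := by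
  rw [Fin.sum_univ_eq_sum_range (fun m => (w ^ e) ^ m)]
  split_ifs with h
  · rw [(hw.pow_eq_one_iff_dvd e).2 h]; simp
  · have h1 : w ^ e ≠ 1 := fun h' => h ((hw.pow_eq_one_iff_dvd e).1 h')
    have h2 := mul_geom_sum (w ^ e) n
    rw [← pow_mul, mul_comm e n, pow_mul, hw.pow_eq_one, one_pow, sub_self] at h2
    exact (mul_eq_zero.1 h2).resolve_left (sub_ne_zero.2 h1)

open Polynomial in
/-- evaluation map -/
noncomputable def evT {F : Type*} [Field F] (n r a : ℕ) (w : F) :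
    degreeLT F r →ₗ[F] (Fin n → F) where
  toFun f := fun m => w ^ (a * (m : ℕ)) * (f : F[X]).eval (w ^ (m : ℕ))
  map_add' f g := by ext m; simp [mul_add]
  map_smul' c f := by ext m; simp; ring

open Polynomial in
theorem aux_weight {F : Type*} [Field F] {n r a : ℕ} {w : F} (hw : IsPrimitiveRoot w n)
    (hn : 0 < n) (f : degreeLT F r) (hf : f ≠ 0) : n + 1 ≤ hWeight (evT n r a w f) + r := by
  classical
  have hf' : (f : F[X]) ≠ 0 := fun h => hf (Subtype.ext h)
  have hw0 : w ≠ 0 := hw.ne_zero hn.ne'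
  have hdeg : (f : F[X]).natDegree < r :=
    (natDegree_lt_iff_degree_lt hf').2 (mem_degreeLT.1 f.2)
  have hz : (Finset.univ.filter fun m => ¬ evT n r a w f m ≠ 0).card ≤ (f : F[X]).natDegree := by
    refine le_trans ?_ ((Multiset.toFinset_card_le _).trans (card_roots' (f : F[X])))
    refine Finset.card_le_card_of_injOn (fun m : Fin n => w ^ (m : ℕ)) ?_ ?_
    · intro m hm
      have : evT n r a w f m = 0 := by simpa using hm
      have h2 : w ^ (a * (m : ℕ)) * (f : F[X]).eval (w ^ (m : ℕ)) = 0 := this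
      have h3 := (mul_eq_zero.1 h2).resolve_left (pow_ne_zero _ hw0)
      simp [hf', h3]
    · intro i _ j _ hij
      exact Fin.ext (hw.pow_inj i.2 j.2 hij)
  have hs := Finset.card_filter_add_card_filter_not (s := (Finset.univ : Finset (Fin n)))
    (fun m => evT n r a w f m ≠ 0)
  rw [Finset.card_univ, Fintype.card_fin] at hs
  have : hWeight (evT n r a w f) = (Finset.univ.filter fun m => evT n r a w f m ≠ 0).card := by
    unfold hWeight; congr
  omega

open Polynomial in
theorem aux_weight_le {F : Type*} [Field F] {n r a : ℕ} (w : F) (hr : 0 < r) (hrn : r < n) :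
    ∃ f : degreeLT F r, f ≠ 0 ∧ hWeight (evT n r a w f) ≤ n - r + 1 := by
  classical
  have hm : (∏ i ∈ Finset.range (r-1), (X - C (w ^ i))).Monic :=
    monic_prod_of_monic _ _ fun i _ => monic_X_sub_C _
  refine ⟨⟨∏ i ∈ Finset.range (r-1), (X - C (w ^ i)), ?_⟩, ?_, ?_⟩
  · rw [mem_degreeLT, ← natDegree_lt_iff_degree_lt hm.ne_zero,
      natDegree_prod_of_monic _ _ fun i _ => monic_X_sub_C _]
    simp only [natDegree_X_sub_C]
    simp; omega
  · intro h; exact hm.ne_zero (congrArg Subtype.val h)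
  · unfold hWeight
    have : n - r + 1 = ((Finset.range n).filter (fun i => r - 1 ≤ i)).card := by
      have : (Finset.range n).filter (fun i => r - 1 ≤ i) = Finset.Ico (r-1) n := by
        ext; simp; tauto
      rw [this, Nat.card_Ico]; omega
    rw [this]
    refine Finset.card_le_card_of_injOn (fun m : Fin n => (m : ℕ)) ?_ (fun i _ j _ h => Fin.ext h)
    intro m hm
    have hm := (Finset.mem_filter.1 (Finset.mem_coe.1 hm)).2
    simp only [Finset.coe_filter, Finset.mem_range, Set.mem_setOf_eq, m.2, true_and]
    by_contra hlt
    apply hm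
    change w ^ (a * (m : ℕ)) * (∏ i ∈ Finset.range (r-1), (X - C (w ^ i))).eval (w ^ (m : ℕ)) = 0
    rw [eval_prod, Finset.prod_eq_zero (i := (m : ℕ)) (Finset.mem_range.2 (by omega)) (by simp),
      mul_zero]

open Polynomial in
theorem aux_pair {F : Type*} [Field F] {n r a : ℕ} {w : F} (hw : IsPrimitiveRoot w n)
    (hrn : r < n) (ha : n ∣ 2 * a + (r - 1)) (f : degreeLT F r) (k : ℕ) (hk : k < r)
    (hX : (X ^ (r - 1 - k) : F[X]) ∈ degreeLT F r) :
    ∑ m, evT n r a w ⟨X ^ (r - 1 - k), hX⟩ m * evT n r a w f m = n * (f : F[X]).coeff k := by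
  have hdeg : (f : F[X]).natDegree < r := by
    by_cases h0 : (f : F[X]) = 0
    · rw [h0]; simp; omega
    · exact (natDegree_lt_iff_degree_lt h0).2 (mem_degreeLT.1 f.2)
  have h1 : ∀ m : Fin n, evT n r a w ⟨X ^ (r - 1 - k), hX⟩ m * evT n r a w f m =
      ∑ i ∈ Finset.range r, (f : F[X]).coeff i * (w ^ (2 * a + (r - 1 - k) + i)) ^ (m : ℕ) := by
    intro m
    change w ^ (a * (m : ℕ)) * (X ^ (r - 1 - k) : F[X]).eval (w ^ (m : ℕ)) *
      (w ^ (a * (m : ℕ)) * (f : F[X]).eval (w ^ (m : ℕ))) = _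
    rw [eval_eq_sum_range' hdeg, Finset.mul_sum, Finset.mul_sum]
    refine Finset.sum_congr rfl fun i _ => ?_
    rw [eval_pow, eval_X]
    ring
  rw [Finset.sum_congr rfl fun m _ => h1 m, Finset.sum_comm]
  simp_rw [← Finset.mul_sum, aux_sum hw]
  rw [Finset.sum_eq_single k]
  · rw [if_pos, mul_comm]
    convert ha using 1; omega
  · intro i hi hik
    rw [if_neg, mul_zero]
    intro hd
    rw [Finset.mem_range] at hi
    have h3 : (n : ℤ) ∣ (i : ℤ) - k := by
      have h4 : (n : ℤ) ∣ ((2 * a + (r - 1 - k) + i : ℕ) : ℤ) - ((2 * a + (r - 1) : ℕ) : ℤ) :=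
        dvd_sub (Int.natCast_dvd_natCast.2 hd) (Int.natCast_dvd_natCast.2 ha)
      convert h4 using 1; omega
    have := Int.eq_zero_of_abs_lt_dvd h3 (by rw [abs_lt]; omega)
    omega
  · intro h; exact absurd (Finset.mem_range.2 hk) h

open Polynomial in
/-- For `0 < r < n` with at least one of `n, r` odd and a prime `p` not
dividing `n`, there is an LCD MDS `(n, r, n−r+1)` code over some finite field `GF(p^β)` of
characteristic `p`. -/
theorem exists_LCD_MDS_code (n r p : ℕ) [Fact p.Prime] (hr0 : 0 < r) (hrn : r < n)
    (hodd : Odd n ∨ Odd r) (hpn : ¬ p ∣ n) :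
    ∃ β : ℕ, 1 ≤ β ∧ ∃ C : Submodule (GaloisField p β) (Fin n → GaloisField p β),
      Module.finrank (GaloisField p β) C = r ∧ minDist C = n - r + 1 ∧
        C ⊓ dualCode C = ⊥ := by
  obtain ⟨β, hβ, w, hw⟩ := aux_prim n p (by omega) hpn
  refine ⟨β, hβ, ?_⟩
  obtain ⟨a, ha⟩ : ∃ a, n ∣ 2 * a + (r - 1) := by
    have he : 2 ∣ (n - 1) * (r - 1) := by
      rcases hodd with ⟨k, hk⟩ | ⟨k, hk⟩
      · exact Dvd.dvd.mul_right ⟨k, by omega⟩ _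
      · exact Dvd.dvd.mul_left ⟨k, by omega⟩ _
    obtain ⟨a, ha⟩ := he
    refine ⟨a, r - 1, ?_⟩
    rw [← ha]
    obtain ⟨t, rfl⟩ : ∃ t, n = t + 1 := ⟨n - 1, by omega⟩
    simp; ring
  have hn : 0 < n := by omega
  have hinj : Function.Injective (evT n r a w) := by
    rw [← LinearMap.ker_eq_bot, LinearMap.ker_eq_bot']
    intro f hf
    by_contra h
    have := aux_weight (a := a) hw hn f h
    rw [hf] at this
    simp [hWeight] at this
    omega
  refine ⟨LinearMap.range (evT n r a w), ?_, ?_, ?_⟩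
  · rw [LinearMap.finrank_range_of_inj hinj, (degreeLTEquiv _ r).finrank_eq]
    simp
  · obtain ⟨f, hf, hle⟩ := aux_weight_le (a := a) (n := n) w hr0 hrn
    have hge := aux_weight (a := a) hw hn f hf
    have hmem : n - r + 1 ∈ {d | ∃ v ∈ LinearMap.range (evT n r a w), v ≠ 0 ∧ hWeight v = d} := by
      refine ⟨_, ⟨f, rfl⟩, ?_, by omega⟩
      intro h
      exact hf (hinj (by rw [h, map_zero]))
    apply le_antisymm (Nat.sInf_le hmem)
    refine le_csInf ⟨_, hmem⟩ ?_
    rintro d ⟨_, ⟨g, rfl⟩, hg, rfl⟩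
    have := aux_weight (a := a) hw hn g (fun h => hg (by rw [h, map_zero]))
    omega
  · rw [eq_bot_iff]
    rintro _ ⟨⟨f, rfl⟩, hd⟩
    have hn0 : (n : GaloisField p β) ≠ 0 := fun h => hpn ((CharP.cast_eq_zero_iff _ p n).1 h)
    have hf : f = 0 := by
      apply Subtype.ext
      ext k
      by_cases hk : k < r
      · have hX : (X ^ (r - 1 - k) : (GaloisField p β)[X]) ∈ degreeLT (GaloisField p β) r := by
          rw [mem_degreeLT, degree_X_pow]
          exact_mod_cast (by omega : r - 1 - k < r)
        have h1 := aux_pair hw hrn ha f k hk hX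
        rw [hd _ ⟨_, rfl⟩] at h1
        simpa using (mul_eq_zero.1 h1.symm).resolve_left hn0
      · have := mem_degreeLT.1 f.2
        rw [coeff_eq_zero_of_degree_lt (lt_of_lt_of_le this (by exact_mod_cast not_lt.1 hk))]
        simp
    rw [hf, map_zero]
    exact Submodule.zero_mem _
end

section
/- Let F be a finite field with q elements, let n be even with n ∣ (q − 1), and let r be odd with 0 < r < n. Then there exists a linear code C ⊆ F^n with dim C = r, minimum distance n − r + 1, and C ∩ C^⊥ = {0}; that is, an LCD MDS (n, r, n−r+1) code exists over F. -/
open Polynomial in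
/-- Weighted evaluation map. -/
noncomputable def evMap {F : Type*} [Field F] (n r t : ℕ) (z : F) :
    Polynomial.degreeLT F r →ₗ[F] (Fin n → F) where
  toFun f := fun m => (z ^ (m : ℕ)) ^ t * (f : F[X]).eval (z ^ (m : ℕ))
  map_add' f g := by ext m; simp [mul_add]
  map_smul' c f := by ext m; simp; ring

theorem pow_sum_aux {F : Type*} [Field F] {n : ℕ} {z : F} (hz : IsPrimitiveRoot z n) (k : ℕ) :
    ∑ m : Fin n, (z ^ (m : ℕ)) ^ k = if n ∣ k then (n : F) else 0 := by
  split_ifs with h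
  · have h1 : z ^ k = 1 := (hz.pow_eq_one_iff_dvd k).2 h
    simp [← pow_mul, mul_comm _ k, pow_mul z k, h1]
  · have h1 : z ^ k ≠ 1 := fun h' => h ((hz.pow_eq_one_iff_dvd k).1 h')
    have h2 := mul_geom_sum (z ^ k) n
    rw [← pow_mul, mul_comm k n, pow_mul, hz.pow_eq_one, one_pow, sub_self] at h2
    have h3 := (mul_eq_zero.1 h2).resolve_left (sub_ne_zero.2 h1)
    rw [← h3, ← Fin.sum_univ_eq_sum_range]
    exact Finset.sum_congr rfl fun m _ => by rw [← pow_mul, ← pow_mul, mul_comm]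

theorem exists_prim_aux (F : Type*) [Field F] [Fintype F] (n : ℕ)
    (hdvd : n ∣ Fintype.card F - 1) : ∃ z : F, IsPrimitiveRoot z n := by
  classical
  obtain ⟨g, hg⟩ := IsCyclic.exists_ofOrder_eq_natCard (α := Fˣ)
  rw [Nat.card_eq_fintype_card, Fintype.card_units] at hg
  have hg' := IsPrimitiveRoot.orderOf g
  rw [hg] at hg'
  obtain ⟨c, hc⟩ := hdvd
  have hpos : 0 < Fintype.card F - 1 := by
    have := Fintype.one_lt_card (α := F)
    omega
  have := hg'.pow hpos (a := c) (b := n) (by rw [hc, mul_comm])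
  exact ⟨_, IsPrimitiveRoot.coe_units_iff.2 this⟩

theorem weight_compl_aux {F : Type*} [Field F] {n : ℕ} (v : Fin n → F) [DecidableEq F] :
    hWeight v + (Finset.univ.filter fun m => v m = 0).card = n := by
  have h := Finset.card_filter_add_card_filter_not (s := (Finset.univ : Finset (Fin n)))
    (fun m => v m = 0)
  rw [Finset.card_univ, Fintype.card_fin] at h
  unfold hWeight
  rw [add_comm]
  refine Eq.trans ?_ h
  congr!

open Polynomial in
theorem zeros_aux {F : Type*} [Field F] [DecidableEq F] {n r t : ℕ} {z : F}
    (hz : IsPrimitiveRoot z n) (hn : n ≠ 0)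
    (f : Polynomial.degreeLT F r) (hf : f ≠ 0) :
    (Finset.univ.filter fun m => evMap n r t z f m = 0).card < r := by
  have hf' : (f : F[X]) ≠ 0 := fun h => hf (Subtype.ext h)
  have hz0 : z ≠ 0 := hz.ne_zero hn
  have hd : (f : F[X]).natDegree < r :=
    (Polynomial.natDegree_lt_iff_degree_lt hf').2 (Polynomial.mem_degreeLT.1 f.2)
  refine lt_of_le_of_lt ?_ hd
  refine le_trans ?_ (Polynomial.card_roots' (f : F[X]))
  refine le_trans ?_ (Multiset.toFinset_card_le _)
  refine Finset.card_le_card_of_injOn (fun m => z ^ (m : ℕ)) ?_ ?_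
  · intro m hm
    simp [evMap, hz0] at hm
    simp [hf', hm]
  · intro a _ b _ hab
    exact Fin.ext (hz.pow_inj a.2 b.2 hab)

open Polynomial in
theorem lcd_aux {F : Type*} [Field F] {n s : ℕ} {z : F}
    (hz : IsPrimitiveRoot z n) (hrn : 2 * s + 1 < n)
    (f : Polynomial.degreeLT F (2 * s + 1))
    (h : evMap n (2 * s + 1) (n - s) z f ∈
      dualCode (LinearMap.range (evMap n (2 * s + 1) (n - s) z))) : f = 0 := by
  have : NeZero n := ⟨by omega⟩
  have hn0 : (n : F) ≠ 0 := (hz.neZero').out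
  apply Subtype.ext
  ext j
  change (f : F[X]).coeff j = 0
  by_cases hj : j < 2 * s + 1
  swap
  · exact Polynomial.coeff_eq_zero_of_degree_lt
      (lt_of_lt_of_le (Polynomial.mem_degreeLT.1 f.2) (by exact_mod_cast not_lt.1 hj))
  have hX : (X ^ (2 * s - j) : F[X]) ∈ Polynomial.degreeLT F (2 * s + 1) := by
    rw [Polynomial.mem_degreeLT, Polynomial.degree_X_pow]
    exact_mod_cast (by omega : 2 * s - j < 2 * s + 1)
  have h1 := h _ ⟨⟨_, hX⟩, rfl⟩
  have hnd : (f : F[X]).natDegree < 2 * s + 1 := by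
    by_cases h0 : (f : F[X]) = 0
    · simp [h0]
    · exact (Polynomial.natDegree_lt_iff_degree_lt h0).2 (Polynomial.mem_degreeLT.1 f.2)
  have key : ∑ m : Fin n, (evMap n (2 * s + 1) (n - s) z ⟨_, hX⟩ m) *
      evMap n (2 * s + 1) (n - s) z f m =
      ∑ i ∈ Finset.range (2 * s + 1), (f : F[X]).coeff i *
        ∑ m : Fin n, (z ^ (m : ℕ)) ^ (2 * (n - s) + (2 * s - j) + i) := by
    simp_rw [Finset.mul_sum]
    rw [Finset.sum_comm]
    refine Finset.sum_congr rfl fun m _ => ?_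
    simp only [evMap, LinearMap.coe_mk, AddHom.coe_mk, eval_pow, eval_X]
    rw [Polynomial.eval_eq_sum_range' hnd, ← mul_assoc, Finset.mul_sum]
    refine Finset.sum_congr rfl fun i _ => ?_
    ring
  rw [key, Finset.sum_eq_single j] at h1
  · rw [pow_sum_aux hz, if_pos ⟨2, by omega⟩] at h1
    exact (mul_eq_zero.1 h1).resolve_right hn0
  · intro i hi hij
    rw [Finset.mem_range] at hi
    rw [pow_sum_aux hz, if_neg, mul_zero]
    rintro ⟨c, hc⟩
    have e : 2 * n + i = n * c + j := by omega
    rcases lt_trichotomy c 2 with hc2 | hc2 | hc2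
    · have : n * c ≤ n * 1 := Nat.mul_le_mul_left _ (by omega)
      omega
    · subst hc2; omega
    · have : n * 3 ≤ n * c := Nat.mul_le_mul_left _ (by omega)
      omega
  · intro hj'; exact absurd (Finset.mem_range.2 hj) hj'

/-- Over a finite field `F` with `q` elements, for `n` even with
`n ∣ (q − 1)` and any odd `r` with `0 < r < n`, there exists an LCD MDS `(n, r, n−r+1)`
code over `F`. -/
theorem exists_LCD_MDS_code_even_length (F : Type*) [Field F] [Fintype F] (n r : ℕ)
    (hn : Even n) (hdvd : n ∣ Fintype.card F - 1) (hr : Odd r) (hr0 : 0 < r) (hrn : r < n) :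
    ∃ C : Submodule F (Fin n → F),
      Module.finrank F C = r ∧ minDist C = n - r + 1 ∧ C ⊓ dualCode C = ⊥ := by
  classical
  obtain ⟨z, hz⟩ := exists_prim_aux F n hdvd
  obtain ⟨s, rfl⟩ := hr
  have hn0 : n ≠ 0 := by omega
  have hz0 : z ≠ 0 := hz.ne_zero hn0
  have hinj : Function.Injective (evMap n (2 * s + 1) (n - s) z) := by
    rw [injective_iff_map_eq_zero]
    intro f hf
    by_contra hne
    have := zeros_aux (t := n - s) hz hn0 f hne
    simp [hf] at this
    omega
  refine ⟨LinearMap.range (evMap n (2 * s + 1) (n - s) z), ?_, ?_, ?_⟩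
  · rw [LinearMap.finrank_range_of_inj hinj, (Polynomial.degreeLTEquiv F _).finrank_eq]
    simp
  · have hlow : ∀ f, f ≠ 0 → n - (2 * s + 1) + 1 ≤
        hWeight (evMap n (2 * s + 1) (n - s) z f) := by
      intro f hf
      have h1 := zeros_aux (t := n - s) hz hn0 f hf
      have h2 := weight_compl_aux (evMap n (2 * s + 1) (n - s) z f)
      omega
    let P : Polynomial F :=
      ∏ k ∈ Finset.range (2 * s), (Polynomial.X - Polynomial.C (z ^ k))
    have hPm : P.Monic := Polynomial.monic_prod_of_monic _ _ fun k _ => Polynomial.monic_X_sub_C _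
    have hPd : P.natDegree = 2 * s := by
      rw [Polynomial.natDegree_prod_of_monic _ _ fun k _ => Polynomial.monic_X_sub_C _]
      simp only [Polynomial.natDegree_X_sub_C]
      simp
    have hP : P ∈ Polynomial.degreeLT F (2 * s + 1) := by
      rw [Polynomial.mem_degreeLT, ← Polynomial.natDegree_lt_iff_degree_lt hPm.ne_zero]
      omega
    have hPne : (⟨P, hP⟩ : Polynomial.degreeLT F (2 * s + 1)) ≠ 0 :=
      fun h => hPm.ne_zero (congrArg Subtype.val h)
    have hup : hWeight (evMap n (2 * s + 1) (n - s) z ⟨P, hP⟩) ≤ n - (2 * s + 1) + 1 := by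
      have h2 := weight_compl_aux (evMap n (2 * s + 1) (n - s) z ⟨P, hP⟩)
      have h3 : 2 * s ≤ (Finset.univ.filter fun m =>
          evMap n (2 * s + 1) (n - s) z ⟨P, hP⟩ m = 0).card := by
        have h4 : (Finset.univ : Finset (Fin (2 * s))).card = 2 * s := by simp
        refine le_trans h4.ge ?_
        refine Finset.card_le_card_of_injOn
          (fun k => (⟨k.1, by have := k.2; omega⟩ : Fin n)) ?_ ?_
        · intro k _
          have : Polynomial.eval (z ^ (k : ℕ)) P = 0 := by
            rw [Polynomial.eval_prod]
            exact Finset.prod_eq_zero (Finset.mem_range.2 k.2) (by simp)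
          simp [evMap, this]
        · intro a _ b _ hab
          exact Fin.ext (Fin.mk.inj_iff.1 hab)
      omega
    apply le_antisymm
    · refine le_trans (Nat.sInf_le ⟨_, ⟨_, rfl⟩, ?_, rfl⟩) hup
      exact fun h => hPne (hinj (by rw [h, map_zero]))
    · apply le_csInf
      · exact ⟨_, _, ⟨⟨P, hP⟩, rfl⟩, fun h => hPne (hinj (by rw [h, map_zero])), rfl⟩
      · rintro d ⟨v, ⟨f, rfl⟩, hv, rfl⟩
        exact hlow f fun h => hv (by rw [h, map_zero])
  · rw [eq_bot_iff]
    rintro v ⟨⟨f, rfl⟩, hv⟩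
    have := lcd_aux hz hrn f hv
    simp [this]
end
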